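/- Let n ≥ 1 and let L : ℝⁿ × ℝⁿ → ℝ be superlinear in the velocity, in the sense that for every C > 0 there exists D ∈ ℝ such that L(x,v) ≥ C‖v‖ − D for all (x,v) ∈ ℝⁿ × ℝⁿ. Then for any two distinct points m₀, m₁ ∈ ℝⁿ, the infimum over Lipschitz curves γ : [0,T] → ℝⁿ with γ(0) = m₀ and γ(T) = m₁ of the action ∫₀ᵀ L(γ(t), γ'(t)) dt tends to +∞ as T → 0⁺; that is, for every R > 0 there exists T₀ > 0 such that for all T ∈ (0, T₀) every such curve has action at least R. -/

import Mathlib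

open Set

/-!
The displacement of an absolutely continuous curve is at most the integral of its speed: test it
against a norming functional `ℓ` of `γ b - γ a` and apply the scalar fundamental theorem of calculus
to `ℓ ∘ γ`. Hence the growth bound `C * ‖v‖ - D ≤ L x v` integrates to
`C * ‖γ T - γ 0‖ - D * T ≤ ∫ L (γ, γ')`. For endpoints at distance at least `δ`, the slope
`C = (|R| + 1) / δ` makes the left-hand side at least `|R| + 1 - D * T`, which is at least `R` as
soon as `D * T ≤ 1`.
-/

open MeasureTheory
open scoped NNReal Topology

section AbsolutelyContinuous

theorem absolutelyContinuousOnInterval_comp_of_lipschitzWith {X Y : Type*} [PseudoMetricSpace X]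
    [PseudoMetricSpace Y] {g : X → Y} {f : ℝ → X} {K : ℝ≥0} {a b : ℝ} (hg : LipschitzWith K g)
    (hf : AbsolutelyContinuousOnInterval f a b) : AbsolutelyContinuousOnInterval (g ∘ f) a b := by
  have hlim := Filter.Tendsto.const_mul (K : ℝ) hf
  rw [mul_zero] at hlim
  refine squeeze_zero (fun _ ↦ Finset.sum_nonneg fun _ _ ↦ dist_nonneg) (fun I ↦ ?_) hlim
  rw [Finset.mul_sum]
  exact Finset.sum_le_sum fun i _ ↦ hg.dist_le_mul _ _

variable {E : Type*} [NormedAddCommGroup E] [NormedSpace ℝ E] {γ : ℝ → E} {a b : ℝ}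

theorem norm_sub_le_integral_of_norm_deriv_le {B : ℝ → ℝ} (hab : a ≤ b)
    (hγ : AbsolutelyContinuousOnInterval γ a b)
    (hγd : ∀ᵐ t, t ∈ Ioo a b → DifferentiableAt ℝ γ t)
    (hγB : ∀ᵐ t, t ∈ Ioo a b → ‖deriv γ t‖ ≤ B t) (hB : IntervalIntegrable B volume a b) :
    ‖γ b - γ a‖ ≤ ∫ t in a..b, B t := by
  obtain ⟨ℓ, hℓ_norm, hℓ⟩ := exists_dual_vector'' ℝ (γ b - γ a)
  have hℓγ : AbsolutelyContinuousOnInterval (ℓ ∘ γ) a b :=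
    absolutelyContinuousOnInterval_comp_of_lipschitzWith ℓ.lipschitz hγ
  have hderiv : ∀ᵐ t, t ∈ Ioo a b → deriv (ℓ ∘ γ) t ≤ B t := by
    filter_upwards [hγd, hγB] with t hd hBt ht
    calc deriv (ℓ ∘ γ) t = ℓ (deriv γ t) :=
          (ℓ.hasFDerivAt.comp_hasDerivAt t (hd ht).hasDerivAt).deriv
      _ ≤ ‖ℓ (deriv γ t)‖ := Real.le_norm_self _
      _ ≤ ‖deriv γ t‖ := ℓ.le_of_opNorm_le_of_le hℓ_norm le_rfl |>.trans_eq (one_mul _)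
      _ ≤ B t := hBt ht
  calc ‖γ b - γ a‖ = ℓ (γ b) - ℓ (γ a) := by rw [← map_sub, hℓ]; rfl
    _ = ∫ t in a..b, deriv (ℓ ∘ γ) t := hℓγ.integral_deriv_eq_sub.symm
    _ ≤ ∫ t in a..b, B t := by
      refine intervalIntegral.integral_mono_ae_restrict hab hℓγ.intervalIntegrable_deriv hB ?_
      rw [← restrict_Ioo_eq_restrict_Icc]
      exact (ae_restrict_iff' measurableSet_Ioo).mpr hderiv

theorem mul_norm_sub_sub_mul_le_integral {φ : ℝ → ℝ} {C D : ℝ} (hC : 0 < C) (hab : a ≤ b)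
    (hγ : AbsolutelyContinuousOnInterval γ a b)
    (hγd : ∀ᵐ t, t ∈ Ioo a b → DifferentiableAt ℝ γ t)
    (hγφ : ∀ᵐ t, t ∈ Ioo a b → C * ‖deriv γ t‖ - D ≤ φ t) (hφ : IntervalIntegrable φ volume a b) :
    C * ‖γ b - γ a‖ - D * (b - a) ≤ ∫ t in a..b, φ t := by
  have hspeed : ∀ᵐ t, t ∈ Ioo a b → ‖deriv γ t‖ ≤ (φ t + D) / C := by
    filter_upwards [hγφ] with t hφt ht
    rw [le_div_iff₀' hC]
    linarith [hφt ht]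
  have hlength : ‖γ b - γ a‖ ≤ ∫ t in a..b, (φ t + D) / C :=
    norm_sub_le_integral_of_norm_deriv_le hab hγ hγd hspeed
      ((hφ.add intervalIntegrable_const).div_const C)
  rw [intervalIntegral.integral_div, intervalIntegral.integral_add hφ intervalIntegrable_const,
    intervalIntegral.integral_const, smul_eq_mul, le_div_iff₀' hC] at hlength
  linarith

end AbsolutelyContinuous

theorem ae_differentiableAt_of_lipschitzOnWith_Icc {E : Type*} [NormedAddCommGroup E]
    [NormedSpace ℝ E] [FiniteDimensional ℝ E] {γ : ℝ → E} {K : ℝ≥0} {a b : ℝ}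
    (hγ : LipschitzOnWith K γ (Icc a b)) : ∀ᵐ t, t ∈ Ioo a b → DifferentiableAt ℝ γ t := by
  filter_upwards [hγ.ae_differentiableWithinAt_of_mem_real] with t hd ht
  exact (hd (Ioo_subset_Icc_self ht)).differentiableAt (Icc_mem_nhds ht.1 ht.2)

theorem intervalIntegrable_comp_derivWithin_of_lipschitzOnWith {E F : Type*}
    [NormedAddCommGroup E] [NormedSpace ℝ E] [ProperSpace E] [NormedAddCommGroup F]
    {Φ : E × E → F} {γ : ℝ → E} {K : ℝ≥0} {a b : ℝ} (hΦ : Continuous Φ) (hab : a ≤ b)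
    (hγ : LipschitzOnWith K γ (Icc a b)) :
    IntervalIntegrable (fun t ↦ Φ (γ t, derivWithin γ (Icc a b) t)) volume a b := by
  have hnhds : ∀ t ∈ Ioo a b, Icc a b ∈ 𝓝 t := fun t ht ↦ Icc_mem_nhds ht.1 ht.2
  suffices h : IntegrableOn (fun t ↦ Φ (γ t, deriv γ t)) (Ioo a b) by
    rw [intervalIntegrable_iff_integrableOn_Ioo_of_le hab]
    refine h.congr_fun (fun t ht ↦ ?_) measurableSet_Ioo
    simp only [derivWithin_of_mem_nhds (hnhds t ht)]
  have hmeas : AEStronglyMeasurable (fun t ↦ Φ (γ t, deriv γ t)) (volume.restrict (Ioo a b)) :=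
    hΦ.comp_aestronglyMeasurable <|
      ((hγ.continuousOn.mono Ioo_subset_Icc_self).aestronglyMeasurable measurableSet_Ioo).prodMk
        (aestronglyMeasurable_deriv γ _)
  have hcompact : IsCompact ((γ '' Icc a b) ×ˢ Metric.closedBall (0 : E) K) :=
    (isCompact_Icc.image_of_continuousOn hγ.continuousOn).prod (isCompact_closedBall 0 _)
  obtain ⟨M, hM⟩ := hcompact.exists_bound_of_continuousOn hΦ.continuousOn
  refine .of_bound measure_Ioo_lt_top hmeas M <|
    ae_restrict_of_forall_mem measurableSet_Ioo fun t ht ↦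
      hM _ ⟨mem_image_of_mem γ (Ioo_subset_Icc_self ht), ?_⟩
  exact mem_closedBall_zero_iff.mpr (norm_deriv_le_of_lipschitzOn (hnhds t ht) hγ)

theorem stmt_16_general {E : Type*} [NormedAddCommGroup E] [NormedSpace ℝ E] {L : E → E → ℝ}
    (hsuper : ∀ C : ℝ, 0 < C → ∃ D : ℝ, ∀ x v : E, C * ‖v‖ - D ≤ L x v)
    {δ : ℝ} (hδ : 0 < δ) (R : ℝ) :
    ∃ T₀ : ℝ, 0 < T₀ ∧ ∀ T : ℝ, 0 < T → T < T₀ → ∀ γ : ℝ → E,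
      AbsolutelyContinuousOnInterval γ 0 T →
      (∀ᵐ t, t ∈ Ioo 0 T → DifferentiableAt ℝ γ t) →
      IntervalIntegrable (fun t ↦ L (γ t) (derivWithin γ (Icc 0 T) t)) volume 0 T →
      δ ≤ ‖γ T - γ 0‖ →
      R ≤ ∫ t in (0 : ℝ)..T, L (γ t) (derivWithin γ (Icc 0 T) t) := by
  have hC : 0 < (|R| + 1) / δ := by positivity
  obtain ⟨D, hD⟩ := hsuper _ hC
  refine ⟨1 / (|D| + 1), by positivity, fun T hT hT₀ γ hγ hγd hint hdist ↦ ?_⟩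
  have hDT : D * T ≤ 1 := by
    rw [lt_div_iff₀ (by positivity)] at hT₀
    nlinarith [le_abs_self D]
  have hgrowth : ∀ t ∈ Ioo 0 T,
      (|R| + 1) / δ * ‖deriv γ t‖ - D ≤ L (γ t) (derivWithin γ (Icc 0 T) t) := fun t ht ↦ by
    rw [derivWithin_of_mem_nhds (Icc_mem_nhds ht.1 ht.2)]
    exact hD _ _
  calc R ≤ |R| := le_abs_self R
    _ ≤ |R| + 1 - D * T := by linarith
    _ = (|R| + 1) / δ * δ - D * (T - 0) := by rw [div_mul_cancel₀ _ hδ.ne', sub_zero]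
    _ ≤ (|R| + 1) / δ * ‖γ T - γ 0‖ - D * (T - 0) := by gcongr
    _ ≤ ∫ t in (0 : ℝ)..T, L (γ t) (derivWithin γ (Icc 0 T) t) :=
      mul_norm_sub_sub_mul_le_integral hC hT.le hγ hγd (.of_forall hgrowth) hint

/-- Small-time blow-up of the minimal connecting action (half of Lemma 6.4 of the
paper): for a (continuous) Lagrangian with superlinear growth in the velocity, the
action of Lipschitz curves joining two distinct points in time T tends to +∞ as T → 0⁺. -/
theorem stmt_16 (n : ℕ) (hn : 1 ≤ n)
    (L : EuclideanSpace ℝ (Fin n) → EuclideanSpace ℝ (Fin n) → ℝ)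
    (hLc : Continuous fun q : EuclideanSpace ℝ (Fin n) × EuclideanSpace ℝ (Fin n) =>
      L q.1 q.2)
    (hsuper : ∀ C : ℝ, 0 < C → ∃ D : ℝ, ∀ x v : EuclideanSpace ℝ (Fin n),
      C * ‖v‖ - D ≤ L x v)
    (m₀ m₁ : EuclideanSpace ℝ (Fin n)) (hne : m₀ ≠ m₁) :
    ∀ R : ℝ, 0 < R → ∃ T₀ : ℝ, 0 < T₀ ∧ ∀ T : ℝ, 0 < T → T < T₀ →
      ∀ γ : ℝ → EuclideanSpace ℝ (Fin n),
        (∃ K, LipschitzOnWith K γ (Icc 0 T)) → γ 0 = m₀ → γ T = m₁ →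
        R ≤ ∫ t in (0:ℝ)..T, L (γ t) (derivWithin γ (Icc 0 T) t) := by
  intro R _
  obtain ⟨T₀, hT₀, hblowup⟩ := stmt_16_general hsuper (norm_sub_pos_iff.mpr hne.symm) R
  refine ⟨T₀, hT₀, fun T hT hTT₀ γ ⟨K, hγ⟩ h₀ h₁ ↦ ?_⟩
  exact hblowup T hT hTT₀ γ (uIcc_of_le hT.le ▸ hγ).absolutelyContinuousOnInterval
    (ae_differentiableAt_of_lipschitzOnWith_Icc hγ)
    (intervalIntegrable_comp_derivWithin_of_lipschitzOnWith hLc hT.le hγ) (by rw [h₀, h₁])
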